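/- arXiv:1901.10892 — 5 statements merged into one kernel-verified Lean document; each statement's English description precedes it below -/
import Mathlib

section
/- Generation: Suppose τ ⊢ β ∋ t : B is derivable over an architecture. Then there exist a constructor f of type A₁ → ⋯ → A_m → B, terms t₁ : A₁, …, t_m : A_m (m ≥ 0), and agents α₁, …, αₙ (n ≥ 1) such that t ≡ f t₁ ⋯ t_m, β = αₙ, the agent α₁ possesses f (i.e., τ ⊢ α₁ ∋ f : A₁ → ⋯ → A_m → B), the events α₁ →^{t:B} α₂, …, α_{n−1} →^{t:B} αₙ occur in τ in this order, and moreover τ ⊢ α₁ ∋ t₁ : A₁, …, τ ⊢ α₁ ∋ t_m : A_m. -/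
namespace PrivacyByDesign

/-- Object-level types over a set `σ` of atomic types. -/
inductive Ty (σ : Type) : Type where
  | atom : σ → Ty σ
  | arrow : Ty σ → Ty σ → Ty σ

/-- `Ty.arrows [A₁, …, Aₙ] B` is the type `A₁ → ⋯ → Aₙ → B`. -/
def Ty.arrows {σ : Type} : List (Ty σ) → Ty σ → Ty σ
  | [], B => B
  | A :: As, B => Ty.arrow A (Ty.arrows As B)

/-- Rename the atomic types occurring in a type. -/
def Ty.mapAtom {σ σ' : Type} (f : σ → σ') : Ty σ → Ty σ'
  | .atom a => .atom (f a)
  | .arrow A B => .arrow (Ty.mapAtom f A) (Ty.mapAtom f B)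

/-- Terms over a set `κ` of constructors. -/
inductive Tm (κ : Type) : Type where
  | con : κ → Tm κ
  | app : Tm κ → Tm κ → Tm κ

/-- `Tm.apps f [t₁, …, tₘ]` is the applied term `f t₁ ⋯ tₘ`. -/
def Tm.apps {κ : Type} : Tm κ → List (Tm κ) → Tm κ
  | f, [] => f
  | f, t :: ts => Tm.apps (Tm.app f t) ts

/-- Rename the constructors occurring in a term. -/
def Tm.mapCon {κ κ' : Type} (g : κ → κ') : Tm κ → Tm κ'
  | .con c => .con (g c)
  | .app s t => .app (Tm.mapCon g s) (Tm.mapCon g t)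

/-- An architecture over a type system: each constructor `c : κ` has the type `conTy c`;
`H α` is the set of constructors that agent `α` initially possesses; `M α β` is the set
of atomic types that `α` may send in a message to `β`. -/
structure Arch (Ag σ κ : Type) : Type where
  conTy : κ → Ty σ
  H : Ag → Set κ
  M : Ag → Ag → Set σ

/-- An event `α →^{t : A} β`. -/
structure Event (Ag σ κ : Type) : Type where
  src : Ag
  tm : Tm κ
  ty : Ty σ
  tgt : Ag

/-- A trace is a finite sequence of events. -/
abbrev Trace (Ag σ κ : Type) : Type := List (Event Ag σ κ)

/-- The derivable judgements `τ ⊢ α ∋ t : A`, generated by the rules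
(init), (message₁), (message₂) and (func). -/
inductive Deriv {Ag σ κ : Type} (𝒜 : Arch Ag σ κ) :
    Trace Ag σ κ → Ag → Tm κ → Ty σ → Prop where
  | init {α : Ag} {c : κ} :
      c ∈ 𝒜.H α → Deriv 𝒜 [] α (Tm.con c) (𝒜.conTy c)
  | message₁ {τ : Trace Ag σ κ} {α β : Ag} {t : Tm κ} {A : σ} :
      A ∈ 𝒜.M α β → Deriv 𝒜 τ α t (Ty.atom A) →
      Deriv 𝒜 (τ ++ [⟨α, t, Ty.atom A, β⟩]) β t (Ty.atom A)
  | message₂ {τ : Trace Ag σ κ} {α β γ : Ag} {t s : Tm κ} {A : σ} {C : Ty σ} :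
      A ∈ 𝒜.M α β → Deriv 𝒜 τ α t (Ty.atom A) → Deriv 𝒜 τ γ s C →
      Deriv 𝒜 (τ ++ [⟨α, t, Ty.atom A, β⟩]) γ s C
  | func {τ : Trace Ag σ κ} {α : Ag} {f t : Tm κ} {A B : Ty σ} :
      Deriv 𝒜 τ α f (Ty.arrow A B) → Deriv 𝒜 τ α t A →
      Deriv 𝒜 τ α (Tm.app f t) B

/-- A trace `τ` is valid iff `τ ⊢ α ∋ t : A` is derivable for some `α`, `t`, `A`. -/
def ValidTrace {Ag σ κ : Type} (𝒜 : Arch Ag σ κ) (τ : Trace Ag σ κ) : Prop :=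
  ∃ α t A, Deriv 𝒜 τ α t A

/-- Agent `α` can compute terms of (atomic) type `A` iff it initially possesses a
constructor of type `B₁ → ⋯ → Bₙ → A` (with `n ≥ 0`). -/
def CanCompute {Ag σ κ : Type} (𝒜 : Arch Ag σ κ) (α : Ag) (A : σ) : Prop :=
  ∃ c ∈ 𝒜.H α, ∃ Bs : List (Ty σ), 𝒜.conTy c = Ty.arrows Bs (Ty.atom A)

/-- The chain of events `α₁ →^{t:B} α₂, …, αₙ₋₁ →^{t:B} αₙ` along the list
`αs = [α₁, …, αₙ]`. -/
def chainEvents {Ag σ κ : Type} (t : Tm κ) (B : Ty σ) (αs : List Ag) : Trace Ag σ κ :=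
  List.zipWith (fun a b => Event.mk a t B b) αs αs.tail

theorem arrows_snoc {σ : Type} (As : List (Ty σ)) (A B : Ty σ) :
    Ty.arrows (As ++ [A]) B = Ty.arrows As (Ty.arrow A B) := by
  induction As with
  | nil => rfl
  | cons X Xs ih => simp [Ty.arrows, ih]

theorem apps_snoc {κ : Type} (ts : List (Tm κ)) (f t : Tm κ) :
    Tm.apps f (ts ++ [t]) = Tm.app (Tm.apps f ts) t := by
  induction ts generalizing f with
  | nil => rfl
  | cons x xs ih => simp [Tm.apps, ih]

theorem chainEvents_snoc {Ag σ κ : Type} (t : Tm κ) (B : Ty σ) (αs : List Ag) (α β : Ag)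
    (h : αs.getLast? = some α) :
    chainEvents t B (αs ++ [β]) = chainEvents t B αs ++ [⟨α, t, B, β⟩] := by
  induction αs with
  | nil => simp at h
  | cons x xs ih =>
    cases xs with
    | nil =>
      simp at h
      simp [chainEvents, h]
    | cons y ys =>
      have h2 := ih (by simpa [List.getLast?_cons_cons] using h)
      simpa [chainEvents] using h2

theorem generation_aux {Ag σ κ : Type} (𝒜 : Arch Ag σ κ) (τ : Trace Ag σ κ)
    (β : Ag) (t : Tm κ) (B : Ty σ) (h : Deriv 𝒜 τ β t B) :
    ∃ (f : κ) (As : List (Ty σ)) (ts : List (Tm κ)) (αs : List Ag) (α₁ : Ag),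
      𝒜.conTy f = Ty.arrows As B ∧
      t = Tm.apps (Tm.con f) ts ∧
      αs.head? = some α₁ ∧
      αs.getLast? = some β ∧
      (chainEvents t B αs).Sublist τ ∧
      Deriv 𝒜 τ α₁ (Tm.con f) (Ty.arrows As B) ∧
      List.Forall₂ (Deriv 𝒜 τ α₁) ts As ∧
      (∀ A C, B = Ty.arrow A C → αs = [β]) := by
  induction h with
  | @init α c hc =>
    exact ⟨c, [], [], [α], α, rfl, rfl, rfl, rfl, by simp [chainEvents], Deriv.init hc,
      List.Forall₂.nil, fun _ _ _ => rfl⟩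
  | @message₁ τ α β t A hM hd ih =>
    obtain ⟨f, As, ts, αs, α₁, h1, h2, h3, h4, h5, h6, h7, -⟩ := ih
    refine ⟨f, As, ts, αs ++ [β], α₁, h1, h2, by simp [h3], by simp, ?_,
      Deriv.message₂ hM hd h6, h7.imp (fun _ _ hx => Deriv.message₂ hM hd hx), ?_⟩
    · rw [chainEvents_snoc t _ αs α β h4]
      exact h5.append (List.Sublist.refl _)
    · intro A C hAC
      cases hAC
  | @message₂ τ α β γ t s A C hM hd hs ihd ih =>
    obtain ⟨f, As, ts, αs, α₁, h1, h2, h3, h4, h5, h6, h7, h8⟩ := ih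
    exact ⟨f, As, ts, αs, α₁, h1, h2, h3, h4, h5.trans (List.sublist_append_left _ _),
      Deriv.message₂ hM hd h6, h7.imp (fun _ _ hx => Deriv.message₂ hM hd hx), h8⟩
  | @func τ α g t A B hg ht ihg iht =>
    obtain ⟨f, As, ts, αs, α₁, h1, h2, h3, h4, h5, h6, h7, h8⟩ := ihg
    have h9 := h8 A B rfl
    subst h9
    have h10 : α = α₁ := by simpa using h3
    subst h10
    refine ⟨f, As ++ [A], ts ++ [t], [α], α, ?_, ?_, rfl, rfl, by simp [chainEvents], ?_, ?_,
      fun _ _ _ => rfl⟩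
    · rw [arrows_snoc, h1]
    · rw [apps_snoc, ← h2]
    · rw [arrows_snoc]; exact h6
    · exact List.rel_append h7 (List.Forall₂.cons ht List.Forall₂.nil)

/-- Generation: if `τ ⊢ β ∋ t : B`, then there are a constructor `f` of
type `A₁ → ⋯ → Aₘ → B`, terms `t₁ : A₁, …, tₘ : Aₘ` (`m ≥ 0`) and agents
`α₁, …, αₙ` (`n ≥ 1`) such that `t ≡ f t₁ ⋯ tₘ`, `β = αₙ`, `α₁` possesses `f`,
the events `α₁ →^{t:B} α₂, …, αₙ₋₁ →^{t:B} αₙ` occur in `τ` in this order, and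
`τ ⊢ α₁ ∋ t₁ : A₁, …, τ ⊢ α₁ ∋ tₘ : Aₘ`. -/
theorem generation {Ag σ κ : Type} (𝒜 : Arch Ag σ κ) (τ : Trace Ag σ κ)
    (β : Ag) (t : Tm κ) (B : Ty σ) (h : Deriv 𝒜 τ β t B) :
    ∃ (f : κ) (As : List (Ty σ)) (ts : List (Tm κ)) (αs : List Ag) (α₁ : Ag),
      𝒜.conTy f = Ty.arrows As B ∧
      t = Tm.apps (Tm.con f) ts ∧
      αs.head? = some α₁ ∧
      αs.getLast? = some β ∧
      (chainEvents t B αs).Sublist τ ∧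
      Deriv 𝒜 τ α₁ (Tm.con f) (Ty.arrows As B) ∧
      List.Forall₂ (Deriv 𝒜 τ α₁) ts As := by
  obtain ⟨f, As, ts, αs, α₁, h1, h2, h3, h4, h5, h6, h7, -⟩ := generation_aux 𝒜 τ β t B h
  exact ⟨f, As, ts, αs, α₁, h1, h2, h3, h4, h5, h6, h7⟩

end PrivacyByDesign
end

section
/- If τ ⊢ β ∋ t : B is derivable over an architecture, then either β can compute terms of type B (i.e., β initially possesses a constructor of type B₁ → ⋯ → Bₙ → B for some types B₁, …, Bₙ, with n ≥ 0), or there is an event α →^{t:B} β occurring in τ for some agent α. -/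
namespace PrivacyByDesign

theorem Ty.arrows_append_singleton {σ : Type} (Bs : List (Ty σ)) (A B : Ty σ) :
    Ty.arrows (Bs ++ [A]) B = Ty.arrows Bs (Ty.arrow A B) := by
  induction Bs with
  | nil => rfl
  | cons C Cs ih => exact congrArg (Ty.arrow C) ih

/-- Every event of a derivable trace carries an atomic type. -/
theorem Deriv.event_atomic {Ag σ κ : Type} {𝒜 : Arch Ag σ κ}
    {τ : Trace Ag σ κ} {β : Ag} {t : Tm κ} {B : Ty σ}
    (h : Deriv 𝒜 τ β t B) : ∀ e ∈ τ, ∃ A : σ, e.ty = Ty.atom A := by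
  induction h with
  | init _ => intro e he; cases he
  | message₁ _ _ ih =>
    intro e he
    rcases List.mem_append.1 he with he | he
    · exact ih e he
    · rw [List.mem_singleton.1 he]; exact ⟨_, rfl⟩
  | message₂ _ _ _ ih _ =>
    intro e he
    rcases List.mem_append.1 he with he | he
    · exact ih e he
    · rw [List.mem_singleton.1 he]; exact ⟨_, rfl⟩
  | func _ _ ih _ => exact ih

/-- if `τ ⊢ β ∋ t : B`, then either `β` can compute terms of type `B`
(it initially possesses a constructor of type `B₁ → ⋯ → Bₙ → B`, `n ≥ 0`), or some
event `α →^{t:B} β` occurs in `τ`. -/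
theorem possession_computed_or_received {Ag σ κ : Type} (𝒜 : Arch Ag σ κ)
    (τ : Trace Ag σ κ) (β : Ag) (t : Tm κ) (B : Ty σ)
    (h : Deriv 𝒜 τ β t B) :
    (∃ c ∈ 𝒜.H β, ∃ Bs : List (Ty σ), 𝒜.conTy c = Ty.arrows Bs B) ∨
      (∃ α : Ag, Event.mk α t B β ∈ τ) := by
  induction h with
  | init hc => exact Or.inl ⟨_, hc, [], rfl⟩
  | message₁ _ _ _ => exact Or.inr ⟨_, List.mem_append_right _ (List.mem_singleton.2 rfl)⟩
  | message₂ _ _ _ _ ih =>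
    rcases ih with h | ⟨α, h⟩
    · exact Or.inl h
    · exact Or.inr ⟨α, List.mem_append_left _ h⟩
  | func hf _ ih _ =>
    rcases ih with ⟨c, hc, Bs, h⟩ | ⟨α, h⟩
    · exact Or.inl ⟨c, hc, Bs ++ [_], h.trans (Ty.arrows_append_singleton _ _ _).symm⟩
    · obtain ⟨A, hA⟩ := hf.event_atomic _ h
      cases hA

end PrivacyByDesign
end

section
/- Let T be a type system, Ag a set of agents, and C a finite set of negative constraints of the form α ∋ A ⇒ B over T and Ag. Let B be an architecture over the safe type system T_C with agents Ag′ ⊇ Ag, equipped with a partition {P_α}_{α ∈ Ag} of Ag′ satisfying: α ∈ P_α; if β may send type A to β′ across different partition sets then A has the form C_γ(B); if β initially possesses π_{αA} then β ∈ P_α; for every constraint α ∋ A ⇒ B in C, any constructor with target A initially possessed by an agent of P_α is π_{αA}. Then for any valid trace τ through B, any constraint α ∋ A ⇒ B in C, and any agent β ∈ P_α: if τ ⊢ β ∋ t : A for some term t, then τ ⊢ B (i.e., some agent possesses a term of type B after τ). -/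
namespace PrivacyByDesign

/-- Atomic types of the safe type system `T_C` (first algorithm): the base atomic types
of `T` together with the certified types `C_α(A)`. -/
inductive SAtom (Ag σ : Type) : Type where
  | base : σ → SAtom Ag σ
  | cert : Ag → σ → SAtom Ag σ

/-- Constructors of the safe type system `T_C` (first algorithm): the base constructors
of `T`, the constructors `m_{αA}^{β₁⋯βₙ}` (with the choice of `β₁, …, βₙ ∈ Ag` given
as a function from indices), and the constructors `π_{αA}`. -/
inductive SCon (Ag σ κ : Type) : Type where
  | base : κ → SCon Ag σ κ
  | m : Ag → σ → (ℕ → Ag) → SCon Ag σ κ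
  | pi : Ag → σ → SCon Ag σ κ

/-- The typing of the constructors of `T_C`, where `Cs α A` lists the types
`B₁, …, Bₙ` such that the constraints of `C` beginning with `α ∋ A` are
`α ∋ A ⇒ B₁, …, α ∋ A ⇒ Bₙ`:
`m_{αA}^{β₁⋯βₙ} : A → C_{β₁}(B₁) → ⋯ → C_{βₙ}(Bₙ) → C_α(A)` and
`π_{αA} : C_α(A) → A`. -/
def safeConTy {Ag σ κ : Type} (conTy : κ → Ty σ) (Cs : Ag → σ → List σ) :
    SCon Ag σ κ → Ty (SAtom Ag σ)
  | .base c => Ty.mapAtom SAtom.base (conTy c)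
  | .m α A βf =>
      Ty.arrows
        (Ty.atom (SAtom.base A) ::
          List.mapIdx (fun i B => Ty.atom (SAtom.cert (βf i) B)) (Cs α A))
        (Ty.atom (SAtom.cert α A))
  | .pi α A => Ty.arrow (Ty.atom (SAtom.cert α A)) (Ty.atom (SAtom.base A))

/-- Some agent possesses a term of base type `A` after `τ`. -/
def SomeHas {Ag σ κ Ag' : Type} (ℬ : Arch Ag' (SAtom Ag σ) (SCon Ag σ κ))
    (τ : Trace Ag' (SAtom Ag σ) (SCon Ag σ κ)) (A : σ) : Prop :=
  ∃ γ s, Deriv ℬ τ γ s (Ty.atom (SAtom.base A))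

/-- Everything derivable after `τ` is derivable after `τ'`. -/
def TrLe {Ag σ κ : Type} (ℬ : Arch Ag σ κ) (τ τ' : Trace Ag σ κ) : Prop :=
  ∀ γ s C, Deriv ℬ τ γ s C → Deriv ℬ τ' γ s C

/-- Kripke-style interpretation of types. -/
def Val {Ag σ κ Ag' : Type} (Cs : Ag → σ → List σ)
    (ℬ : Arch Ag' (SAtom Ag σ) (SCon Ag σ κ)) (P : Ag → Set Ag') (β : Ag') :
    Ty (SAtom Ag σ) → Trace Ag' (SAtom Ag σ) (SCon Ag σ κ) → Prop
  | .atom (.base A), τ => ∀ α, β ∈ P α → ∀ B ∈ Cs α A, SomeHas ℬ τ B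
  | .atom (.cert γ A), τ => ∀ B, (B = A ∨ B ∈ Cs γ A) → SomeHas ℬ τ B
  | .arrow S T, τ => ∀ τ', TrLe ℬ τ τ' → (∃ t, Deriv ℬ τ' β t S) →
      Val Cs ℬ P β S τ' → Val Cs ℬ P β T τ'

theorem SomeHas.mono {Ag σ κ Ag' : Type} {ℬ : Arch Ag' (SAtom Ag σ) (SCon Ag σ κ)}
    {τ τ' : Trace Ag' (SAtom Ag σ) (SCon Ag σ κ)} {A : σ}
    (h : TrLe ℬ τ τ') : SomeHas ℬ τ A → SomeHas ℬ τ' A := by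
  rintro ⟨γ, s, d⟩
  exact ⟨γ, s, h _ _ _ d⟩

theorem Val.mono {Ag σ κ Ag' : Type} {Cs : Ag → σ → List σ}
    {ℬ : Arch Ag' (SAtom Ag σ) (SCon Ag σ κ)} {P : Ag → Set Ag'} {β : Ag'}
    {T : Ty (SAtom Ag σ)} {τ τ' : Trace Ag' (SAtom Ag σ) (SCon Ag σ κ)}
    (h : TrLe ℬ τ τ') (hv : Val Cs ℬ P β T τ) : Val Cs ℬ P β T τ' := by
  match T, hv with
  | .atom (.base A), hv => exact fun α hα B hB => (hv α hα B hB).mono h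
  | .atom (.cert γ A), hv => exact fun B hB => (hv B hB).mono h
  | .arrow S T, hv =>
    exact fun τ'' h' => hv τ'' (fun _ _ _ d => h' _ _ _ (h _ _ _ d))

theorem val_base {Ag σ κ Ag' : Type} {Cs : Ag → σ → List σ}
    {ℬ : Arch Ag' (SAtom Ag σ) (SCon Ag σ κ)} {P : Ag → Set Ag'} {β : Ag'}
    (U : Ty σ) (τ : Trace Ag' (SAtom Ag σ) (SCon Ag σ κ))
    (h : ∀ (α : Ag) (A B : σ), B ∈ Cs α A → β ∈ P α →
      ¬ ∃ Ts : List (Ty (SAtom Ag σ)), Ty.mapAtom SAtom.base U = Ty.arrows Ts (Ty.atom (SAtom.base A))) :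
    Val Cs ℬ P β (Ty.mapAtom SAtom.base U) τ := by
  induction U generalizing τ with
  | atom a => exact fun α hα B hB => absurd ⟨[], rfl⟩ (h α a B hB hα)
  | arrow S T _ ih =>
    intro τ' _ _ _
    refine ih τ' fun α A B hB hα => ?_
    rintro ⟨Ts, e⟩
    refine h α A B hB hα ⟨Ty.mapAtom SAtom.base S :: Ts, ?_⟩
    simp [Ty.mapAtom, Ty.arrows, e]

theorem val_m {Ag σ κ Ag' : Type} {Cs : Ag → σ → List σ}
    {ℬ : Arch Ag' (SAtom Ag σ) (SCon Ag σ κ)} {P : Ag → Set Ag'} {β : Ag'}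
    (γ : Ag) (A : σ) (L : List σ) (βf : ℕ → Ag)
    (τ : Trace Ag' (SAtom Ag σ) (SCon Ag σ κ))
    (h : ∀ B, (B = A ∨ B ∈ Cs γ A) → SomeHas ℬ τ B ∨ B ∈ L) :
    Val Cs ℬ P β (Ty.arrows
        (List.mapIdx (fun i B => Ty.atom (SAtom.cert (βf i) B)) L)
        (Ty.atom (SAtom.cert γ A))) τ := by
  induction L generalizing τ βf with
  | nil => 
    intro B hB
    simpa using h B hB
  | cons C L ih =>
    rw [List.mapIdx_cons]
    intro τ' hle _ hv
    refine ih (fun i => βf (i + 1)) τ' fun B hB => ?_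
    rcases h B hB with h' | h'
    · exact Or.inl (h'.mono hle)
    · rcases List.mem_cons.1 h' with rfl | h'
      · exact Or.inl (hv _ (Or.inl rfl))
      · exact Or.inr h'

/-- the generalized claim in the proof of Theorem 1: under the same
hypotheses as Theorem 1, for any valid trace `τ` through `ℬ`, any constraint
`α ∋ A ⇒ B` in `C` and any agent `β ∈ P_α`, if `τ ⊢ β ∋ t : A` for some `t` then
`τ ⊢ B`, i.e. some agent possesses a term of type `B` after `τ`. -/
theorem safe_partition_generalized {Ag σ κ Ag' : Type}
    (conTy : κ → Ty σ) (Cs : Ag → σ → List σ)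
    (hfin : {p : Ag × σ | Cs p.1 p.2 ≠ []}.Finite)
    (ι : Ag → Ag') (hι : Function.Injective ι)
    (ℬ : Arch Ag' (SAtom Ag σ) (SCon Ag σ κ))
    (hty : ℬ.conTy = safeConTy conTy Cs)
    (P : Ag → Set Ag')
    (hpart : ∀ x : Ag', ∃! α : Ag, x ∈ P α)
    (h1 : ∀ α : Ag, ι α ∈ P α)
    (h2 : ∀ (β β' : Ag') (T : SAtom Ag σ), T ∈ ℬ.M β β' →
      (¬ ∃ α : Ag, β ∈ P α ∧ β' ∈ P α) → ∃ γ B, T = SAtom.cert γ B)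
    (h3 : ∀ (β : Ag') (α : Ag) (A : σ), SCon.pi α A ∈ ℬ.H β → β ∈ P α)
    (h4 : ∀ (α : Ag) (A B : σ), B ∈ Cs α A → ∀ β ∈ P α, ∀ c ∈ ℬ.H β,
      (∃ Ts : List (Ty (SAtom Ag σ)), ℬ.conTy c = Ty.arrows Ts (Ty.atom (SAtom.base A))) →
      c = SCon.pi α A) :
    ∀ τ : Trace Ag' (SAtom Ag σ) (SCon Ag σ κ), ValidTrace ℬ τ →
      ∀ (α : Ag) (A B : σ), B ∈ Cs α A →
        ∀ β' ∈ P α,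
          (∃ t, Deriv ℬ τ β' t (Ty.atom (SAtom.base A))) →
          ∃ γ s, Deriv ℬ τ γ s (Ty.atom (SAtom.base B)) := by
  have key : ∀ τ β t T, Deriv ℬ τ β t T → Val Cs ℬ P β T τ := by
    intro τ β t T d
    induction d with
    | @init β c hc =>
      have h4' := fun α A B hB hβ => h4 α A B hB β hβ c hc
      rw [hty] at h4' ⊢
      cases c with
      | base c =>
        refine val_base _ _ fun α A B hB hα hT => ?_
        cases h4' α A B hB hα hT
      | m γ A βf =>
        intro τ' _ hd _
        obtain ⟨t, hd⟩ := hd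
        refine val_m γ A _ βf τ' fun B hB => ?_
        rcases hB with rfl | hB
        · exact Or.inl ⟨_, _, hd⟩
        · exact Or.inr hB
      | pi γ A =>
        intro τ' _ _ hv α hα B hB
        have : α = γ := (hpart β).unique hα (h3 _ _ _ hc)
        subst this
        exact hv B (Or.inr hB)
    | @message₁ τ α β t A hM hd ih =>
      have hle : TrLe ℬ τ (τ ++ [⟨α, t, Ty.atom A, β⟩]) :=
        fun _ _ _ d => Deriv.message₂ hM hd d
      refine Val.mono hle ?_
      cases A with
      | cert γ A => exact ih
      | base A =>
        intro δ hδ B hB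
        by_cases hs : ∃ α' : Ag, α ∈ P α' ∧ β ∈ P α'
        · obtain ⟨α', ha, hb⟩ := hs
          have : δ = α' := (hpart β).unique hδ hb
          subst this
          exact ih δ ha B hB
        · obtain ⟨_, _, e⟩ := h2 _ _ _ hM hs
          cases e
    | message₂ hM hd _ _ ih =>
      exact Val.mono (fun _ _ _ d => Deriv.message₂ hM hd d) ih
    | func _ ht ihf iht => exact ihf _ (fun _ _ _ d => d) ⟨_, ht⟩ iht
  rintro τ - α A B hB β hβ ⟨t, d⟩
  exact key τ β t _ d α hβ B hB

end PrivacyByDesign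
end

section
/- Let A be an architecture and C a finite set of constraints such that for every negative constraint α ∋ A ⇒ B in C, the agent α cannot compute terms of type A. Then every valid trace through the architecture Safe(A, C) produced by the first algorithm satisfies every negative constraint in C. -/
namespace PrivacyByDesign

/-- The first algorithm's `Safe(𝒜, C)`.  Its agents are those of `𝒜` (`Sum.inl α`)
together with an interface `I_α` (`Sum.inr α`) for each agent `α` of `𝒜`; its type
system is `T_C`; each agent of `𝒜` keeps its constructors; every interface possesses
all the constructors `m_{αA}^{β₁⋯βₙ}`, and `I_α` possesses `π_{αA}`; `α` and `I_α`
may send any atomic type of `T` to each other; any two interfaces may send messages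
of type `C_α(A)` to each other. -/
def safeArch1 {Ag σ κ : Type} (𝒜 : Arch Ag σ κ) (Cs : Ag → σ → List σ) :
    Arch (Ag ⊕ Ag) (SAtom Ag σ) (SCon Ag σ κ) where
  conTy := safeConTy 𝒜.conTy Cs
  H := fun x =>
    match x with
    | .inl α => {c | ∃ c₀ ∈ 𝒜.H α, c = SCon.base c₀}
    | .inr γ => {c | (∃ α A βf, c = SCon.m α A βf) ∨ (∃ A, c = SCon.pi γ A)}
  M := fun x y =>
    match x, y with
    | .inl α, .inr γ => {T | α = γ ∧ ∃ A, T = SAtom.base A}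
    | .inr γ, .inl α => {T | α = γ ∧ ∃ A, T = SAtom.base A}
    | .inr _, .inr _ => {T | ∃ α A, T = SAtom.cert α A}
    | .inl _, .inl _ => ∅

/-- Semantic interpretation of types at an interface. -/
def GI {Ag σ : Type} (Cs : Ag → σ → List σ) (γ : Ag) :
    Ty (SAtom Ag σ) → (σ → Prop) → Prop
  | .atom (.base A), W => W A ∧ ∀ B ∈ Cs γ A, W B
  | .atom (.cert α A), W => W A ∧ ∀ B ∈ Cs α A, W B
  | .arrow S T, W => ∀ W' : σ → Prop, (∀ a, W a → W' a) → GI Cs γ S W' → GI Cs γ T W'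

/-- Interpretation of types at an ordinary agent (depends on the target only). -/
def LI {Ag σ : Type} (Cs : Ag → σ → List σ) (α : Ag) :
    Ty (SAtom Ag σ) → (σ → Prop) → Prop
  | .atom (.base A), W => ∀ B ∈ Cs α A, W B
  | .atom (.cert _ _), _ => True
  | .arrow _ T, W => LI Cs α T W

theorem GI_mono {Ag σ : Type} (Cs : Ag → σ → List σ) (γ : Ag) (T : Ty (SAtom Ag σ))
    (W W' : σ → Prop) (h : ∀ a, W a → W' a) (hg : GI Cs γ T W) : GI Cs γ T W' := by
  match T with
  | .atom (.base A) => exact ⟨h _ hg.1, fun B hB => h _ (hg.2 B hB)⟩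
  | .atom (.cert α A) => exact ⟨h _ hg.1, fun B hB => h _ (hg.2 B hB)⟩
  | .arrow S T => exact fun W'' h' hs => hg W'' (fun a ha => h' a (h a ha)) hs

theorem LI_mono {Ag σ : Type} (Cs : Ag → σ → List σ) (γ : Ag) (T : Ty (SAtom Ag σ))
    (W W' : σ → Prop) (h : ∀ a, W a → W' a) (hg : LI Cs γ T W) : LI Cs γ T W' := by
  match T with
  | .atom (.base A) => exact fun B hB => h _ (hg B hB)
  | .atom (.cert α A) => trivial
  | .arrow S T => exact LI_mono Cs γ T W W' h hg

theorem GI_arrows {Ag σ : Type} (Cs : Ag → σ → List σ) (γ : Ag) (U : Ty (SAtom Ag σ)) :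
    ∀ (Ts : List (Ty (SAtom Ag σ))) (W : σ → Prop),
    (∀ W' : σ → Prop, (∀ a, W a → W' a) → (∀ T ∈ Ts, GI Cs γ T W') → GI Cs γ U W') →
    GI Cs γ (Ty.arrows Ts U) W
  | [], W, h => h W (fun _ ha => ha) (by simp)
  | T :: Ts, W, h => by
    intro W' hW hT
    apply GI_arrows Cs γ U Ts W'
    intro W'' hW' hTs
    apply h W'' (fun a ha => hW' a (hW a ha))
    intro T' hT'
    rcases List.mem_cons.1 hT' with rfl | h'
    · exact GI_mono Cs γ _ W' W'' hW' hT
    · exact hTs T' h'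

theorem LI_con {Ag σ : Type} (Cs : Ag → σ → List σ) (α : Ag) (W : σ → Prop) :
    ∀ (T : Ty σ), (∀ Bs A, T = Ty.arrows Bs (Ty.atom A) → ∀ B, B ∉ Cs α A) →
      LI Cs α (Ty.mapAtom SAtom.base T) W
  | .atom A, h => fun B hB => absurd hB (h [] A rfl B)
  | .arrow S T, h => LI_con Cs α W T (fun Bs A e => h (S :: Bs) A (by rw [e]; rfl))

/-- Some agent possesses a term of base type. -/
def HasB {Ag σ κ : Type} (𝒜 : Arch Ag σ κ) (Cs : Ag → σ → List σ)
    (τ : Trace (Ag ⊕ Ag) (SAtom Ag σ) (SCon Ag σ κ)) (B : σ) : Prop :=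
  ∃ β s, Deriv (safeArch1 𝒜 Cs) τ β s (Ty.atom (SAtom.base B))

/-- The invariant. -/
def Inv {Ag σ : Type} (Cs : Ag → σ → List σ) (W : σ → Prop) (T : Ty (SAtom Ag σ)) :
    Ag ⊕ Ag → Prop
  | .inl α => LI Cs α T W
  | .inr γ => GI Cs γ T W

theorem inv_of_deriv {Ag σ κ : Type} (𝒜 : Arch Ag σ κ) (Cs : Ag → σ → List σ)
    (hcc : ∀ (α : Ag) (A B : σ), B ∈ Cs α A → ¬ CanCompute 𝒜 α A)
    {τ : Trace (Ag ⊕ Ag) (SAtom Ag σ) (SCon Ag σ κ)} {x : Ag ⊕ Ag} {t : Tm (SCon Ag σ κ)}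
    {T : Ty (SAtom Ag σ)} (h : Deriv (safeArch1 𝒜 Cs) τ x t T) :
    Inv Cs (HasB 𝒜 Cs τ) T x := by
  induction h with
  | @init x c hc =>
    rcases x with α | γ
    · obtain ⟨c₀, hc₀, rfl⟩ := hc
      exact LI_con Cs α _ _ (fun Bs A e B hB => hcc α A B hB ⟨c₀, hc₀, Bs, e⟩)
    · rcases hc with ⟨α, A, βf, rfl⟩ | ⟨A, rfl⟩
      · apply GI_arrows
        intro W' _ hT
        refine ⟨(hT (Ty.atom (SAtom.base A)) (by simp)).1, fun B hB => ?_⟩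
        obtain ⟨i, hi, rfl⟩ := List.mem_iff_getElem.1 hB
        have := hT (Ty.atom (SAtom.cert (βf i) (Cs α A)[i]))
          (List.mem_cons_of_mem _ (List.mem_mapIdx.2 ⟨i, hi, rfl⟩))
        exact this.1
      · exact fun W' _ hS => hS
  | @message₁ τ x y t A hM hd ih =>
    have mono : ∀ a, HasB 𝒜 Cs τ a → HasB 𝒜 Cs (τ ++ [⟨x, t, Ty.atom A, y⟩]) a :=
      fun a ⟨β, s, hs⟩ => ⟨β, s, Deriv.message₂ hM hd hs⟩
    rcases x with α | γ <;> rcases y with α' | γ'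
    · exact hM.elim
    · obtain ⟨rfl, A, rfl⟩ := hM
      exact ⟨mono _ ⟨_, _, hd⟩, fun B hB => mono _ (ih B hB)⟩
    · obtain ⟨rfl, A, rfl⟩ := hM
      exact fun B hB => mono _ (ih.2 B hB)
    · obtain ⟨α, A, rfl⟩ := hM
      exact ⟨mono _ ih.1, fun B hB => mono _ (ih.2 B hB)⟩
  | @message₂ τ x y z t s A C hM hd hs _ ih =>
    have mono : ∀ a, HasB 𝒜 Cs τ a → HasB 𝒜 Cs (τ ++ [⟨x, t, Ty.atom A, y⟩]) a :=
      fun a ⟨β, s, hs⟩ => ⟨β, s, Deriv.message₂ hM hd hs⟩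
    rcases z with α | γ
    · exact LI_mono _ _ _ _ _ mono ih
    · exact GI_mono _ _ _ _ _ mono ih
  | @func τ x f t A B _ _ ih₁ ih₂ =>
    rcases x with α | γ
    · exact ih₁
    · exact ih₁ _ (fun _ ha => ha) ih₂

/-- if for every negative constraint `α ∋ A ⇒ B` in the finite set `C`
the agent `α` cannot compute terms of type `A` in `𝒜`, then every valid trace through
the first algorithm's `Safe(𝒜, C)` satisfies every negative constraint in `C`. -/
theorem safeArch1_neg_constraints {Ag σ κ : Type}
    (𝒜 : Arch Ag σ κ) (Cs : Ag → σ → List σ)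
    (hfin : {p : Ag × σ | Cs p.1 p.2 ≠ []}.Finite)
    (hcc : ∀ (α : Ag) (A B : σ), B ∈ Cs α A → ¬ CanCompute 𝒜 α A) :
    ∀ τ : Trace (Ag ⊕ Ag) (SAtom Ag σ) (SCon Ag σ κ),
      ValidTrace (safeArch1 𝒜 Cs) τ →
      ∀ (α : Ag) (A B : σ), B ∈ Cs α A →
        ∀ τ₁, τ₁ <+: τ →
          (∃ t, Deriv (safeArch1 𝒜 Cs) τ₁ (Sum.inl α) t (Ty.atom (SAtom.base A))) →
          ∃ β s, Deriv (safeArch1 𝒜 Cs) τ₁ β s (Ty.atom (SAtom.base B)) := by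
  intro τ _ α A B hB τ₁ _ ⟨t, ht⟩
  exact inv_of_deriv 𝒜 Cs hcc ht B hB

end PrivacyByDesign
end

section
/- In the first algorithm's architecture Safe(A, C), the family of sets {P_α}_{α ∈ Ag} defined by P_α = {α, I_α} is a partition of the agents of Safe(A, C) satisfying: (1) α ∈ P_α for all α ∈ Ag; (2) if an agent β may send messages of type A to an agent β′ and β, β′ lie in different sets of the partition, then A has the form C_γ(B) for some γ, B; (3) if β initially possesses π_{αA} then β ∈ P_α; (4) for every constraint α ∋ A ⇒ B in C with α unable to compute terms of type A in A, if an agent β ∈ P_α possesses a constructor with target type A, then this constructor is π_{αA}. -/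
namespace PrivacyByDesign

/-- The target atomic type of a type. -/
def Ty.target {σ : Type} : Ty σ → σ
  | .atom a => a
  | .arrow _ B => Ty.target B

theorem Ty.target_arrows {σ : Type} (Ts : List (Ty σ)) (B : Ty σ) :
    (Ty.arrows Ts B).target = B.target := by
  induction Ts with
  | nil => rfl
  | cons A As ih => simpa [Ty.arrows, Ty.target] using ih

theorem Ty.target_mapAtom {σ σ' : Type} (f : σ → σ') (T : Ty σ) :
    (Ty.mapAtom f T).target = f T.target := by
  induction T with
  | atom a => rfl
  | arrow A B _ ih => simpa [Ty.mapAtom, Ty.target] using ih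

theorem Ty.exists_arrows {σ : Type} (T : Ty σ) :
    ∃ Bs : List (Ty σ), T = Ty.arrows Bs (Ty.atom T.target) := by
  induction T with
  | atom a => exact ⟨[], rfl⟩
  | arrow A B _ ih =>
    obtain ⟨Bs, h⟩ := ih
    exact ⟨A :: Bs, congrArg (Ty.arrow A) h⟩

/-- in the first algorithm's `Safe(𝒜, C)`, the family
`P_α = {α, I_α}` (i.e. `{Sum.inl α, Sum.inr α}`) is a partition of the agents of
`Safe(𝒜, C)` satisfying: (1) `α ∈ P_α`; (2) any type sent between agents in
different sets of the partition has the form `C_γ(B)`; (3) if `β` initially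
possesses `π_{αA}` then `β ∈ P_α`; (4) for every constraint `α ∋ A ⇒ B` in `C` with
`α` unable to compute terms of type `A` in `𝒜`, any constructor with target type `A`
possessed by an agent of `P_α` is `π_{αA}`. -/
theorem safeArch1_partition {Ag σ κ : Type}
    (𝒜 : Arch Ag σ κ) (Cs : Ag → σ → List σ) :
    (∀ x : Ag ⊕ Ag, ∃! α : Ag,
      x ∈ ({Sum.inl α, Sum.inr α} : Set (Ag ⊕ Ag))) ∧
    (∀ α : Ag, Sum.inl α ∈ ({Sum.inl α, Sum.inr α} : Set (Ag ⊕ Ag))) ∧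
    (∀ (β β' : Ag ⊕ Ag) (T : SAtom Ag σ), T ∈ (safeArch1 𝒜 Cs).M β β' →
      (¬ ∃ α : Ag, β ∈ ({Sum.inl α, Sum.inr α} : Set (Ag ⊕ Ag)) ∧
        β' ∈ ({Sum.inl α, Sum.inr α} : Set (Ag ⊕ Ag))) →
      ∃ γ B, T = SAtom.cert γ B) ∧
    (∀ (β : Ag ⊕ Ag) (α : Ag) (A : σ), SCon.pi α A ∈ (safeArch1 𝒜 Cs).H β →
      β ∈ ({Sum.inl α, Sum.inr α} : Set (Ag ⊕ Ag))) ∧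
    (∀ (α : Ag) (A B : σ), B ∈ Cs α A → ¬ CanCompute 𝒜 α A →
      ∀ β ∈ ({Sum.inl α, Sum.inr α} : Set (Ag ⊕ Ag)),
        ∀ c ∈ (safeArch1 𝒜 Cs).H β,
          (∃ Ts : List (Ty (SAtom Ag σ)),
            (safeArch1 𝒜 Cs).conTy c = Ty.arrows Ts (Ty.atom (SAtom.base A))) →
          c = SCon.pi α A) := by
  refine ⟨?_, ?_, ?_, ?_, ?_⟩
  · rintro (x | x)
    · exact ⟨x, by simp, by intro y hy; simpa [eq_comm] using hy⟩
    · exact ⟨x, by simp, by intro y hy; simpa [eq_comm] using hy⟩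
  · intro α
    simp
  · rintro (β | β) (β' | β') T hT hn
    · exact hT.elim
    · obtain ⟨rfl, -⟩ := hT
      exact (hn ⟨β, by simp, by simp⟩).elim
    · obtain ⟨rfl, -⟩ := hT
      exact (hn ⟨β', by simp, by simp⟩).elim
    · exact hT
  · rintro (β | β) α A h
    · obtain ⟨c, -, h⟩ := h
      cases h
    · rcases h with ⟨_, _, _, h⟩ | ⟨_, h⟩
      · cases h
      · cases h
        simp
  · rintro α A B - hA β hβ c hc ⟨Ts, hT⟩
    have ht := congrArg Ty.target hT
    rw [Ty.target_arrows] at ht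
    rcases hβ with rfl | hβ
    · obtain ⟨c₀, hc₀, rfl⟩ := hc
      change (Ty.mapAtom SAtom.base (𝒜.conTy c₀)).target = SAtom.base A at ht
      rw [Ty.target_mapAtom] at ht
      obtain ⟨Bs, hBs⟩ := Ty.exists_arrows (𝒜.conTy c₀)
      rw [SAtom.base.inj ht] at hBs
      exact (hA ⟨c₀, hc₀, Bs, hBs⟩).elim
    · cases hβ
      rcases hc with ⟨α', A', βf, rfl⟩ | ⟨A', rfl⟩
      · change (Ty.arrows (_ :: _) (Ty.atom (SAtom.cert α' A'))).target = SAtom.base A at ht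
        rw [Ty.target_arrows] at ht
        cases ht
      · cases ht
        rfl

end PrivacyByDesign
end
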